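/- There exists an absolute constant c such that the following holds. Let P be a set of m distinct points in the real plane ℝ² and let L be a set of n distinct lines in ℝ². Then the number of incidences satisfies I(P,L) ≤ c·(m^{2/3}·n^{2/3} + m + n). -/

import Mathlib

attribute [local instance] Classical.propDecidable
noncomputable section

/-- The number of incidences between a finite set of points and a finite set of
curves (subsets of `ℝ^d`): the number of pairs `(p, γ)` with `p ∈ γ`. -/
def Incidences {d : ℕ} (P : Finset (Fin d → ℝ)) (C : Finset (Set (Fin d → ℝ))) : ℕ :=
  ((P ×ˢ C).filter fun pc => pc.1 ∈ pc.2).card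

/-- A line in `ℝ^d`. -/
def IsLine {d : ℕ} (ℓ : Set (Fin d → ℝ)) : Prop :=
  ∃ a b : Fin d → ℝ, b ≠ 0 ∧ ℓ = {x | ∃ t : ℝ, x = a + t • b}

namespace SzT

abbrev Pt := ℝ × ℝ
abbrev Ed := Pt × Pt

/-- slope of an edge -/
def sl (e : Ed) : ℝ := (e.2.2 - e.1.2) / (e.2.1 - e.1.1)

/-- height of the line supporting `e` at abscissa `x` -/
def ht (e : Ed) (x : ℝ) : ℝ := e.1.2 + sl e * (x - e.1.1)

lemma ht_left (e : Ed) : ht e e.1.1 = e.1.2 := by simp [ht]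

lemma ht_right (e : Ed) (h : e.1.1 < e.2.1) : ht e e.2.1 = e.2.2 := by
  have : e.2.1 - e.1.1 ≠ 0 := by linarith
  simp only [ht, sl]; field_simp; ring

lemma ht_cross (e f : Ed) (a b : ℝ) (hab : a ≤ b) (h1 : ht e a < ht f a) (h2 : ht f b < ht e b) :
    ∃ x, a < x ∧ x < b ∧ ht e x = ht f x := by
  have hc : ContinuousOn (fun x => ht e x - ht f x) (Set.Icc a b) := by
    unfold ht; fun_prop
  have := intermediate_value_Ioo hab hc
  obtain ⟨x, hx, hx2⟩ := this (show (0:ℝ) ∈ Set.Ioo _ _ from ⟨by linarith, by linarith⟩)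
  exact ⟨x, hx.1, hx.2, by simpa [sub_eq_zero] using hx2⟩

/-- open segments of `e` and `f` share a point -/
def Cross (e f : Ed) : Prop :=
  ∃ x, e.1.1 < x ∧ x < e.2.1 ∧ f.1.1 < x ∧ x < f.2.1 ∧ ht e x = ht f x

structure Good (V : Finset Pt) (E : Finset Ed) : Prop where
  left : ∀ e ∈ E, e.1 ∈ V
  right : ∀ e ∈ E, e.2 ∈ V
  lt : ∀ e ∈ E, e.1.1 < e.2.1
  inter : ∀ e ∈ E, ∀ w ∈ V, e.1.1 < w.1 → w.1 < e.2.1 → w.2 ≠ ht e w.1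

/-- `f` is the next edge above `e` out of the same left end -/
def Nxt (E : Finset Ed) (e f : Ed) : Prop :=
  f ∈ E ∧ f.1 = e.1 ∧ sl e < sl f ∧ ∀ g ∈ E, g.1 = e.1 → sl e < sl g → sl f ≤ sl g

def Wedge (V : Finset Pt) (e f : Ed) (w : Pt) : Prop :=
  w ∈ V ∧ e.1.1 < w.1 ∧ w.1 ≤ e.2.1 ∧ w.1 ≤ f.2.1 ∧ ht e w.1 ≤ w.2 ∧ w.2 ≤ ht f w.1

def Wit (V : Finset Pt) (e f : Ed) (w : Pt) : Prop :=
  Wedge V e f w ∧ ∀ u, Wedge V e f u → w.1 ≤ u.1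

section planar
variable {V : Finset Pt} {E : Finset Ed}

lemma sl_inj (hG : Good V E) (hC : ∀ e ∈ E, ∀ f ∈ E, e ≠ f → ¬ Cross e f)
    {e f : Ed} (he : e ∈ E) (hf : f ∈ E) (h1 : e.1 = f.1) (h2 : sl e = sl f) : e = f := by
  by_contra hne
  apply hC e he f hf hne
  have a := hG.lt e he
  have b := hG.lt f hf
  have c : e.1.1 < min e.2.1 f.2.1 := lt_min a (h1 ▸ b)
  obtain ⟨x, hx1, hx2⟩ := exists_between c
  rw [lt_min_iff] at hx2
  exact ⟨x, hx1, hx2.1, h1 ▸ hx1, hx2.2, by simp [ht, h1, h2]⟩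

lemma ht_lt_of_sl {e f : Ed} (h1 : f.1 = e.1) (h2 : sl e < sl f) {x : ℝ} (hx : e.1.1 < x) :
    ht e x < ht f x := by
  simp only [ht, h1]
  have := mul_lt_mul_of_pos_right h2 (sub_pos.2 hx)
  linarith

lemma ht_le_of_sl {e f : Ed} (h1 : f.1 = e.1) (h2 : sl e ≤ sl f) {x : ℝ} (hx : e.1.1 ≤ x) :
    ht e x ≤ ht f x := by
  simp only [ht, h1]
  have := mul_le_mul_of_nonneg_right h2 (sub_nonneg.2 hx)
  linarith

lemma exists_nxt {e : Ed} (h : ∃ g ∈ E, g.1 = e.1 ∧ sl e < sl g) : ∃ f, Nxt E e f := by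
  obtain ⟨g, hg⟩ := h
  obtain ⟨f, hf, hmin⟩ := Finset.exists_min_image
    (E.filter fun g => g.1 = e.1 ∧ sl e < sl g) sl ⟨g, by simpa using hg⟩
  rw [Finset.mem_filter] at hf
  exact ⟨f, hf.1, hf.2.1, hf.2.2, fun g h1 h2 h3 => hmin g (by simp [h1, h2, h3])⟩

lemma exists_wit (hG : Good V E) {e f : Ed} (he : e ∈ E) (h : Nxt E e f) : ∃ w, Wit V e f w := by
  have hne : ∃ w, Wedge V e f w := by
    have a := hG.lt e he
    have b := hG.lt f h.1
    have b' : e.1.1 < f.2.1 := by rw [← h.2.1]; exact b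
    rcases le_total e.2.1 f.2.1 with hl | hl
    · exact ⟨e.2, hG.right e he, a, le_rfl, hl, (ht_right e a).le,
        by have := ht_lt_of_sl h.2.1 h.2.2.1 a; rw [ht_right e a] at this; exact this.le⟩
    · exact ⟨f.2, hG.right f h.1, b', hl, le_rfl,
        by have := ht_lt_of_sl h.2.1 h.2.2.1 b'; rw [ht_right f b] at this; exact this.le,
        (ht_right f b).ge⟩
  obtain ⟨w, hw⟩ := hne
  obtain ⟨w, hw, hmin⟩ := Finset.exists_min_image
    (V.filter fun w => Wedge V e f w) (fun w => w.1) ⟨w, by simp [hw, hw.1]⟩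
  rw [Finset.mem_filter] at hw
  exact ⟨w, hw.2, fun u hu => hmin u (by simp [hu, hu.1])⟩

/-- The main geometric step: same witness and same type force the same left endpoint. -/
lemma apex_eq_aux (hG : Good V E) (hC : ∀ e ∈ E, ∀ f ∈ E, e ≠ f → ¬ Cross e f)
    {e e' f f' : Ed} {w : Pt} (he : e ∈ E) (hf : f ∈ E) (hne : Nxt E e e') (hnf : Nxt E f f')
    (hw : Wit V e e' w) (hw' : Wit V f f' w) (hle : e.1.1 ≤ f.1.1)
    (h1 : ht f w.1 < w.2 ∨ w.2 < ht e' w.1) (h2 : ht e w.1 < w.2 ∨ w.2 < ht f' w.1) :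
    e.1 = f.1 := by
  by_contra hap
  obtain ⟨⟨-, a1, a2, a3, a4, a5⟩, a6⟩ := hw
  obtain ⟨⟨-, b1, b2, b3, b4, b5⟩, b6⟩ := hw'
  have key : ¬ (ht e f.1.1 ≤ f.1.2 ∧ f.1.2 ≤ ht e' f.1.1) := by
    rintro ⟨k1, k2⟩
    rcases hle.eq_or_lt with h | h
    · have k3 := ht_left e
      have k4 := ht_left e'
      rw [hne.2.1] at k4
      rw [← h] at k1 k2
      exact hap (Prod.ext h (by linarith))
    · have := a6 f.1 ⟨hG.left f hf, h, by linarith, by linarith, k1, k2⟩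
      linarith
  have e1 := congrArg Prod.fst hne.2.1
  have f1 := congrArg Prod.fst hnf.2.1
  have f2 := congrArg Prod.snd hnf.2.1
  by_cases hb : f.1.2 < ht e f.1.1
  · skip
    have s : ht f' f.1.1 < ht e f.1.1 := by
      have := ht_left f'
      rw [f1, f2] at this
      linarith
    obtain ⟨x, x1, x2, x3⟩ := ht_cross f' e f.1.1 w.1 b1.le s (by rcases h2 with h | h <;> linarith)
    refine hC f' hnf.1 e he ?_ ⟨x, by linarith, by linarith, by linarith, by linarith, x3⟩
    rintro rfl; exact lt_irrefl _ s
  · push Not at hb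
    have hb2 : ht e' f.1.1 < f.1.2 := by
      by_contra h; push Not at h; exact key ⟨hb, h⟩
    have s : ht e' f.1.1 < ht f f.1.1 := by rw [ht_left f]; exact hb2
    obtain ⟨x, x1, x2, x3⟩ := ht_cross e' f f.1.1 w.1 b1.le s (by rcases h1 with h | h <;> linarith)
    refine hC e' hne.1 f hf ?_ ⟨x, by linarith, by linarith, by linarith, by linarith, x3⟩
    rintro rfl; exact lt_irrefl _ s

lemma apex_eq (hG : Good V E) (hC : ∀ e ∈ E, ∀ f ∈ E, e ≠ f → ¬ Cross e f)
    {e e' f f' : Ed} {w : Pt} (he : e ∈ E) (hf : f ∈ E) (hne : Nxt E e e') (hnf : Nxt E f f')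
    (hw : Wit V e e' w) (hw' : Wit V f f' w)
    (h : (ht e w.1 < w.2 ∧ ht f w.1 < w.2) ∨ (w.2 < ht e' w.1 ∧ w.2 < ht f' w.1)) :
    e.1 = f.1 := by
  rcases le_total e.1.1 f.1.1 with hl | hl
  · exact apex_eq_aux hG hC he hf hne hnf hw hw' hl (by tauto) (by tauto)
  · exact (apex_eq_aux hG hC hf he hnf hne hw' hw hl (by tauto) (by tauto)).symm

/-- two edges out of the same apex, consecutive wedges both containing `w` -/
lemma same_apex (hG : Good V E) (hC : ∀ e ∈ E, ∀ f ∈ E, e ≠ f → ¬ Cross e f)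
    {e e' f f' : Ed} {w : Pt} (he : e ∈ E) (hf : f ∈ E) (hne : Nxt E e e') (hnf : Nxt E f f')
    (hw : Wit V e e' w) (hw' : Wit V f f' w) (hap : e.1 = f.1)
    (h : (ht e w.1 < w.2 ∧ ht f w.1 < w.2) ∨ (w.2 < ht e' w.1 ∧ w.2 < ht f' w.1)) :
    e = f := by
  obtain ⟨⟨-, a1, a2, a3, a4, a5⟩, a6⟩ := hw
  obtain ⟨⟨-, b1, b2, b3, b4, b5⟩, b6⟩ := hw'
  rcases lt_trichotomy (sl e) (sl f) with hs | hs | hs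
  · exfalso
    have h1 := hne.2.2.2 f hf hap.symm hs
    have h2 := ht_le_of_sl (hap.symm.trans hne.2.1.symm) h1
      (x := w.1) (by rw [hne.2.1]; exact a1.le)
    rcases h with h | h <;> linarith [h.1, h.2]
  · exact sl_inj hG hC he hf hap hs
  · exfalso
    have h1 := hnf.2.2.2 e he hap hs
    have h2 := ht_le_of_sl (hap.trans hnf.2.1.symm) h1
      (x := w.1) (by rw [hnf.2.1]; exact b1.le)
    rcases h with h | h <;> linarith [h.1, h.2]

lemma planar_bound (hG : Good V E) (hC : ∀ e ∈ E, ∀ f ∈ E, e ≠ f → ¬ Cross e f) :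
    E.card ≤ 3 * V.card := by
  set H : Ed → Prop := fun e => ∃ g ∈ E, g.1 = e.1 ∧ sl e < sl g with hH
  have ex : ∀ e, ∃ fw : Ed × Pt, e ∈ E → H e → Nxt E e fw.1 ∧ Wit V e fw.1 fw.2 := by
    intro e
    by_cases h : e ∈ E ∧ H e
    · obtain ⟨f, hf⟩ := exists_nxt h.2
      obtain ⟨w, hw⟩ := exists_wit hG h.1 hf
      exact ⟨(f, w), fun _ _ => ⟨hf, hw⟩⟩
    · exact ⟨(e, e.1), fun a b => absurd ⟨a, b⟩ h⟩
  choose φ hφ using ex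
  set T := E.filter fun e => ¬ H e
  set A := E.filter fun e => H e ∧ ht e (φ e).2.1 < (φ e).2.2
  set B := E.filter fun e => H e ∧ (φ e).2.2 < ht (φ e).1 (φ e).2.1
  have hsub : E ⊆ T ∪ A ∪ B := by
    intro e he
    by_cases h : H e
    · obtain ⟨h1, h2⟩ := hφ e he h
      have h3 := ht_lt_of_sl h1.2.1 h1.2.2.1 h2.1.2.1
      by_cases h4 : ht e (φ e).2.1 < (φ e).2.2
      · simp [A, he, h, h4]
      · have : (φ e).2.2 < ht (φ e).1 (φ e).2.1 := by linarith
        simp [B, he, h, this]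
    · simp [T, he, h]
  have hT : T.card ≤ V.card := by
    refine Finset.card_le_card_of_injOn (fun e => e.1) ?_ ?_
    · intro e he
      exact hG.left e (Finset.mem_filter.1 he).1
    · intro e he f hf hef
      obtain ⟨he1, he2⟩ := Finset.mem_filter.1 he
      obtain ⟨hf1, hf2⟩ := Finset.mem_filter.1 hf
      simp only at hef
      refine sl_inj hG hC he1 hf1 hef (le_antisymm ?_ ?_)
      · by_contra h; push Not at h; exact hf2 ⟨e, he1, hef, h⟩
      · by_contra h; push Not at h; exact he2 ⟨f, hf1, hef.symm, h⟩
  have hA : A.card ≤ V.card := by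
    refine Finset.card_le_card_of_injOn (fun e => (φ e).2) ?_ ?_
    · intro e he
      obtain ⟨he1, he2, he3⟩ := Finset.mem_filter.1 he
      exact (hφ e he1 he2).2.1.1
    · intro e he f hf hef
      obtain ⟨he1, he2, he3⟩ := Finset.mem_filter.1 he
      obtain ⟨hf1, hf2, hf3⟩ := Finset.mem_filter.1 hf
      obtain ⟨a1, a2⟩ := hφ e he1 he2
      obtain ⟨b1, b2⟩ := hφ f hf1 hf2
      simp only at hef
      rw [← hef] at b2 hf3
      exact same_apex hG hC he1 hf1 a1 b1 a2 b2
        (apex_eq hG hC he1 hf1 a1 b1 a2 b2 (Or.inl ⟨he3, hf3⟩)) (Or.inl ⟨he3, hf3⟩)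
  have hB : B.card ≤ V.card := by
    refine Finset.card_le_card_of_injOn (fun e => (φ e).2) ?_ ?_
    · intro e he
      obtain ⟨he1, he2, he3⟩ := Finset.mem_filter.1 he
      exact (hφ e he1 he2).2.1.1
    · intro e he f hf hef
      obtain ⟨he1, he2, he3⟩ := Finset.mem_filter.1 he
      obtain ⟨hf1, hf2, hf3⟩ := Finset.mem_filter.1 hf
      obtain ⟨a1, a2⟩ := hφ e he1 he2
      obtain ⟨b1, b2⟩ := hφ f hf1 hf2
      simp only at hef
      rw [← hef] at b2 hf3
      exact same_apex hG hC he1 hf1 a1 b1 a2 b2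
        (apex_eq hG hC he1 hf1 a1 b1 a2 b2 (Or.inr ⟨he3, hf3⟩)) (Or.inr ⟨he3, hf3⟩)
  have := Finset.card_le_card hsub
  have := Finset.card_union_le (T ∪ A) B
  have := Finset.card_union_le T A
  omega

/-- ordered crossing pairs -/
def XP (E : Finset Ed) : Finset (Ed × Ed) := (E ×ˢ E).filter fun q => q.1 ≠ q.2 ∧ Cross q.1 q.2

lemma crossing_bound (hG : Good V E) : E.card ≤ 3 * V.card + (XP E).card := by
  set E' := E \ (XP E).image Prod.fst
  have hs : E' ⊆ E := Finset.sdiff_subset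
  have h1 : E'.card ≤ 3 * V.card := by
    apply planar_bound
    · exact ⟨fun e h => hG.left e (hs h), fun e h => hG.right e (hs h), fun e h => hG.lt e (hs h),
        fun e h => hG.inter e (hs h)⟩
    · intro e he f hf hne hc
      apply (Finset.mem_sdiff.1 he).2
      exact Finset.mem_image.2 ⟨(e, f), by simp [XP, hs he, hs hf, hne, hc], rfl⟩
  have h2 : E.card ≤ E'.card + ((XP E).image Prod.fst).card := by
    refine le_trans (Finset.card_le_card ?_) (Finset.card_union_le _ _)
    intro e he
    by_cases h : e ∈ (XP E).image Prod.fst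
    · exact Finset.mem_union_right _ h
    · exact Finset.mem_union_left _ (Finset.mem_sdiff.2 ⟨he, h⟩)
  have h3 : ((XP E).image Prod.fst).card ≤ (XP E).card := Finset.card_image_le
  omega

end planar

/-- Bernoulli sampling -/
lemma sample_one {α : Type*} [DecidableEq α] (V T : Finset α) (hT : T ⊆ V) (p : ℝ) :
    ∑ S ∈ V.powerset, (if T ⊆ S then p ^ S.card * (1 - p) ^ (V.card - S.card) else 0)
      = p ^ T.card := by
  rw [← Finset.sum_filter]
  have h := Finset.sum_pow_mul_eq_add_pow p (1 - p) (V \ T)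
  rw [add_sub_cancel, one_pow] at h
  have h' : p ^ T.card = p ^ T.card * ∑ t ∈ (V \ T).powerset,
      p ^ t.card * (1 - p) ^ ((V \ T).card - t.card) := by rw [h, mul_one]
  rw [h', Finset.mul_sum]
  refine Finset.sum_bij' (fun S _ => S \ T) (fun S _ => S ∪ T) ?_ ?_ ?_ ?_ ?_
  · intro S hS
    simp only [Finset.mem_filter, Finset.mem_powerset] at hS ⊢
    exact Finset.sdiff_subset_sdiff hS.1 le_rfl
  · intro S hS
    simp only [Finset.mem_filter, Finset.mem_powerset] at hS ⊢
    exact ⟨Finset.union_subset (hS.trans Finset.sdiff_subset) hT, Finset.subset_union_right⟩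
  · intro S hS
    simp only [Finset.mem_filter, Finset.mem_powerset] at hS
    exact Finset.sdiff_union_of_subset hS.2
  · intro S hS
    simp only [Finset.mem_powerset] at hS
    rw [Finset.union_sdiff_right]
    exact Finset.sdiff_eq_self_of_disjoint (Finset.disjoint_of_subset_left hS Finset.sdiff_disjoint)
  · intro S hS
    simp only [Finset.mem_filter, Finset.mem_powerset] at hS
    have a := Finset.card_sdiff_of_subset hS.2
    have b := Finset.card_sdiff_of_subset hT
    have c := Finset.card_le_card hS.1
    have d := Finset.card_le_card hS.2
    rw [a, b, ← mul_assoc, ← pow_add]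
    have e1 : T.card + (S.card - T.card) = S.card := by omega
    have e2 : V.card - T.card - (S.card - T.card) = V.card - S.card := by omega
    rw [e1, e2]

lemma sample {α β : Type*} [DecidableEq α] (V : Finset α) (A : Finset β) (g : β → Finset α)
    (k : ℕ) (hg : ∀ a ∈ A, g a ⊆ V) (hk : ∀ a ∈ A, (g a).card = k) (p : ℝ) :
    ∑ S ∈ V.powerset, (p ^ S.card * (1 - p) ^ (V.card - S.card)) *
      ((A.filter fun a => g a ⊆ S).card : ℝ) = p ^ k * A.card := by
  have : ∀ S ∈ V.powerset, (p ^ S.card * (1 - p) ^ (V.card - S.card)) *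
      ((A.filter fun a => g a ⊆ S).card : ℝ) = ∑ a ∈ A,
        (if g a ⊆ S then p ^ S.card * (1 - p) ^ (V.card - S.card) else 0) := by
    intro S _
    rw [← Finset.sum_filter, Finset.sum_const, nsmul_eq_mul, mul_comm]
  rw [Finset.sum_congr rfl this, Finset.sum_comm]
  rw [Finset.sum_congr rfl (fun a ha => by rw [sample_one V (g a) (hg a ha) p, hk a ha])]
  rw [Finset.sum_const, nsmul_eq_mul, mul_comm]

lemma crossing_sampled {V : Finset Pt} {E : Finset Ed} (hG : Good V E)
    (hX : ∀ q ∈ XP E, ({q.1.1, q.1.2, q.2.1, q.2.2} : Finset Pt).card = 4)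
    (p : ℝ) (hp0 : 0 ≤ p) (hp1 : p ≤ 1) :
    p ^ 2 * E.card ≤ 3 * (p * V.card) + p ^ 4 * (XP E).card := by
  have s1 := sample V V (fun v => {v}) 1 (by simp) (by simp) p
  have s2 := sample V E (fun e => {e.1, e.2}) 2 (by
    intro e he v hv
    simp only [Finset.mem_insert, Finset.mem_singleton] at hv
    rcases hv with rfl | rfl
    exacts [hG.left e he, hG.right e he]) (by
    intro e he
    apply Finset.card_pair
    intro h
    have := hG.lt e he
    rw [h] at this; exact lt_irrefl _ this) p
  have s4 := sample V (XP E) (fun q => {q.1.1, q.1.2, q.2.1, q.2.2}) 4 (by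
    intro q hq v hv
    obtain ⟨hq, -⟩ := Finset.mem_filter.1 hq
    rw [Finset.mem_product] at hq
    simp only [Finset.mem_insert, Finset.mem_singleton] at hv
    rcases hv with rfl | rfl | rfl | rfl
    exacts [hG.left _ hq.1, hG.right _ hq.1, hG.left _ hq.2, hG.right _ hq.2]) hX p
  rw [pow_one] at s1
  rw [← s1, ← s2, ← s4, Finset.mul_sum, ← Finset.sum_add_distrib]
  refine Finset.sum_le_sum fun S hS => ?_
  rw [Finset.mem_powerset] at hS
  have hw : 0 ≤ p ^ S.card * (1 - p) ^ (V.card - S.card) :=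
    mul_nonneg (pow_nonneg hp0 _) (pow_nonneg (by linarith) _)
  have hG' : Good S (E.filter fun e => {e.1, e.2} ⊆ S) := by
    refine ⟨?_, ?_, ?_, ?_⟩
    · intro e he; exact (Finset.mem_filter.1 he).2 (by simp)
    · intro e he; exact (Finset.mem_filter.1 he).2 (by simp)
    · intro e he; exact hG.lt e (Finset.mem_filter.1 he).1
    · intro e he w hw; exact hG.inter e (Finset.mem_filter.1 he).1 w (hS hw)
  have hb := crossing_bound hG'
  have e1 : (V.filter fun v => {v} ⊆ S) = S := by
    ext v; simp only [Finset.mem_filter, Finset.singleton_subset_iff]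
    exact ⟨fun h => h.2, fun h => ⟨hS h, h⟩⟩
  have e2 : XP (E.filter fun e => {e.1, e.2} ⊆ S) =
      (XP E).filter fun q => {q.1.1, q.1.2, q.2.1, q.2.2} ⊆ S := by
    ext q
    simp only [XP, Finset.mem_filter, Finset.mem_product, Finset.insert_subset_iff,
      Finset.singleton_subset_iff]
    tauto
  rw [e2] at hb
  rw [e1]
  have hb' : ((E.filter fun e => {e.1, e.2} ⊆ S).card : ℝ) ≤ 3 * S.card +
      (((XP E).filter fun q => {q.1.1, q.1.2, q.2.1, q.2.2} ⊆ S).card : ℝ) := by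
    exact_mod_cast hb
  have := mul_le_mul_of_nonneg_left hb' hw
  linarith

def On (p l : Pt) : Prop := p.2 = l.1 * p.1 + l.2

def EdgeOf (P : Finset Pt) (e : Ed) (l : Pt) : Prop :=
  On e.1 l ∧ On e.2 l ∧ ∀ r ∈ P, On r l → e.1.1 < r.1 → e.2.1 ≤ r.1

def edges (P L : Finset Pt) : Finset Ed :=
  (P ×ˢ P).filter fun e => e.1.1 < e.2.1 ∧ ∃ l ∈ L, EdgeOf P e l

lemma mem_edges {P L : Finset Pt} {e : Ed} : e ∈ edges P L ↔
    e.1 ∈ P ∧ e.2 ∈ P ∧ e.1.1 < e.2.1 ∧ ∃ l ∈ L, EdgeOf P e l := by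
  simp [edges, and_assoc]

lemma line_unique {p q l l' : Pt} (hpq : p.1 ≠ q.1) (h1 : On p l) (h2 : On q l)
    (h3 : On p l') (h4 : On q l') : l = l' := by
  unfold On at *
  have : (l.1 - l'.1) * (p.1 - q.1) = 0 := by linarith
  rcases mul_eq_zero.1 this with h | h
  · have h5 : l.1 = l'.1 := by linarith
    refine Prod.ext h5 ?_
    rw [h5] at h1; linarith
  · exact absurd (sub_eq_zero.1 h) hpq

lemma pt_ext {p q l : Pt} (hpq : p.1 = q.1) (h1 : On p l) (h2 : On q l) : p = q := by
  unfold On at *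
  refine Prod.ext hpq ?_
  rw [h1, h2, hpq]

lemma ht_line {e : Ed} {l : Pt} (h : e.1.1 < e.2.1) (h1 : On e.1 l) (h2 : On e.2 l) (x : ℝ) :
    On (x, ht e x) l := by
  unfold On at *
  have h3 : e.2.1 - e.1.1 ≠ 0 := by linarith
  have : sl e = l.1 := by
    rw [sl, div_eq_iff h3]; linarith
  simp only [ht, this]; linarith

lemma good_edges (P L : Finset Pt) : Good P (edges P L) := by
  refine ⟨fun e he => (mem_edges.1 he).1, fun e he => (mem_edges.1 he).2.1,
    fun e he => (mem_edges.1 he).2.2.1, ?_⟩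
  intro e he w hw h1 h2 h3
  obtain ⟨-, -, hlt, l, hl, ha, hb, hc⟩ := mem_edges.1 he
  have := ht_line hlt ha hb w.1
  have hw' : On w l := by rw [← h3] at this; exact this
  have := hc w hw hw' h1
  linarith

/-- two edges on the same line through a common abscissa coincide -/
lemma edge_unique {P : Finset Pt} {e f : Ed} {l : Pt} {x : ℝ} (e1 : e.1 ∈ P) (e2 : e.2 ∈ P)
    (f1 : f.1 ∈ P) (f2 : f.2 ∈ P)
    (he : EdgeOf P e l) (hf : EdgeOf P f l) (h1 : e.1.1 < x) (h2 : x < e.2.1)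
    (h3 : f.1.1 < x) (h4 : x < f.2.1) : e = f := by
  obtain ⟨a1, a2, a3⟩ := he
  obtain ⟨b1, b2, b3⟩ := hf
  have c1 : e.1.1 = f.1.1 := by
    apply le_antisymm
    · by_contra h; push Not at h
      have := b3 e.1 e1 a1 h; linarith
    · by_contra h; push Not at h
      have := a3 f.1 f1 b1 h; linarith
  have c2 : e.2.1 = f.2.1 :=
    le_antisymm (a3 f.2 f2 b2 (by linarith)) (b3 e.2 e2 a2 (by linarith))
  exact Prod.ext (pt_ext c1 a1 b1) (pt_ext c2 a2 b2)

lemma XP_card_le (P L : Finset Pt) : (XP (edges P L)).card ≤ L.card ^ 2 := by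
  have ex : ∀ e : Ed, ∃ l, e ∈ edges P L → l ∈ L ∧ EdgeOf P e l := by
    intro e
    by_cases h : e ∈ edges P L
    · obtain ⟨-, -, -, l, hl, h⟩ := mem_edges.1 h
      exact ⟨l, fun _ => ⟨hl, h⟩⟩
    · exact ⟨0, fun h' => absurd h' h⟩
  choose lam hlam using ex
  rw [sq, ← Finset.card_product]
  refine Finset.card_le_card_of_injOn (fun q => (lam q.1, lam q.2)) ?_ ?_
  · intro q hq
    obtain ⟨hq, -⟩ := Finset.mem_filter.1 hq
    rw [Finset.mem_product] at hq
    exact Finset.mem_coe.2 (Finset.mem_product.2 ⟨(hlam _ hq.1).1, (hlam _ hq.2).1⟩)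
  · rintro ⟨e, f⟩ hq ⟨e', f'⟩ hq' heq
    simp only [Prod.mk.injEq] at heq
    obtain ⟨hq, hne, x, x1, x2, x3, x4, x5⟩ := Finset.mem_filter.1 hq
    obtain ⟨hq', -, y, y1, y2, y3, y4, y5⟩ := Finset.mem_filter.1 hq'
    rw [Finset.mem_product] at hq hq'
    simp only at *
    obtain ⟨he, hf⟩ := hq
    obtain ⟨he', hf'⟩ := hq'
    have le := (hlam _ he).2
    have lf := (hlam _ hf).2
    have le' := (hlam _ he').2
    have lf' := (hlam _ hf').2
    rw [← heq.1] at le'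
    rw [← heq.2] at lf'
    have me := mem_edges.1 he
    have mf := mem_edges.1 hf
    have me' := mem_edges.1 he'
    have mf' := mem_edges.1 hf'
    have o1 := ht_line me.2.2.1 le.1 le.2.1 x
    have o2 := ht_line mf.2.2.1 lf.1 lf.2.1 x
    rw [← x5] at o2
    have o3 := ht_line me'.2.2.1 le'.1 le'.2.1 y
    have o4 := ht_line mf'.2.2.1 lf'.1 lf'.2.1 y
    rw [← y5] at o4
    have hxy : x = y := by
      by_contra hxy
      have hl := line_unique (p := (x, ht e x)) (q := (y, ht e' y)) hxy o1 o3 o2 o4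
      rw [← hl] at lf
      exact hne (edge_unique me.1 me.2.1 mf.1 mf.2.1 le lf x1 x2 x3 x4)
    subst hxy
    rw [edge_unique me.1 me.2.1 me'.1 me'.2.1 le le' x1 x2 y1 y2,
      edge_unique mf.1 mf.2.1 mf'.1 mf'.2.1 lf lf' x3 x4 y3 y4]

lemma XP_distinct (P L : Finset Pt) : ∀ q ∈ XP (edges P L),
    ({q.1.1, q.1.2, q.2.1, q.2.2} : Finset Pt).card = 4 := by
  rintro ⟨e, f⟩ hq
  obtain ⟨hq, hne, x, x1, x2, x3, x4, x5⟩ := Finset.mem_filter.1 hq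
  rw [Finset.mem_product] at hq
  simp only at *
  obtain ⟨e1, e2, e3, l, hl, le⟩ := mem_edges.1 hq.1
  obtain ⟨f1, f2, f3, k, hk, lf⟩ := mem_edges.1 hq.2
  have o1 := ht_line e3 le.1 le.2.1 x
  have o2 := ht_line f3 lf.1 lf.2.1 x
  rw [← x5] at o2
  have key : ∀ p : Pt, On p l → On p k → p.1 ≠ x → False := by
    intro p h1 h2 h3
    have hl := line_unique (p := p) (q := (x, ht e x)) h3 h1 o1 h2 o2
    rw [← hl] at lf
    exact hne (edge_unique e1 e2 f1 f2 le lf x1 x2 x3 x4)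
  have n1 : e.1 ≠ e.2 := fun h => by rw [h] at e3; exact lt_irrefl _ e3
  have n2 : f.1 ≠ f.2 := fun h => by rw [h] at f3; exact lt_irrefl _ f3
  have n3 : e.1 ≠ f.1 := fun h => key e.1 le.1 (h ▸ lf.1) x1.ne
  have n4 : e.1 ≠ f.2 := fun h => key e.1 le.1 (h ▸ lf.2.1) x1.ne
  have n5 : e.2 ≠ f.1 := fun h => key e.2 le.2.1 (h ▸ lf.1) x2.ne'
  have n6 : e.2 ≠ f.2 := fun h => key e.2 le.2.1 (h ▸ lf.2.1) x2.ne'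
  rw [Finset.card_insert_of_notMem (by simp [n1, n3, n4]),
    Finset.card_insert_of_notMem (by simp [n5, n6]), Finset.card_pair n2]

def inc (P L : Finset Pt) : Finset (Pt × Pt) := (P ×ˢ L).filter fun q => On q.1 q.2

lemma inc_le (P L : Finset Pt) : (inc P L).card ≤ L.card + (edges P L).card := by
  set H : Pt × Pt → Prop := fun q => ∃ r ∈ P, On r q.2 ∧ q.1.1 < r.1
  set A := (inc P L).filter H
  set B := (inc P L).filter fun q => ¬ H q
  have hAB : A.card + B.card = (inc P L).card := Finset.card_filter_add_card_filter_not H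
  have hB : B.card ≤ L.card := by
    refine Finset.card_le_card_of_injOn (fun q => q.2) ?_ ?_
    · intro q hq
      have h1 := (Finset.mem_filter.1 (Finset.mem_filter.1 hq).1).1
      exact (Finset.mem_product.1 h1).2
    · rintro ⟨p, l⟩ hq ⟨p', l'⟩ hq' h
      simp only at h
      subst h
      obtain ⟨hq, hn⟩ := Finset.mem_filter.1 hq
      obtain ⟨hq', hn'⟩ := Finset.mem_filter.1 hq'
      obtain ⟨hq, ho⟩ := Finset.mem_filter.1 hq
      obtain ⟨hq', ho'⟩ := Finset.mem_filter.1 hq'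
      rw [Finset.mem_product] at hq hq'
      simp only [H] at *
      push Not at hn hn'
      have := pt_ext (le_antisymm (hn' p hq.1 ho) (hn p' hq'.1 ho')) ho ho'
      rw [this]
  have hA : A.card ≤ (edges P L).card := by
    have ex : ∀ q : Pt × Pt, ∃ r, q ∈ A → r ∈ P ∧ q.1.1 < r.1 ∧ EdgeOf P (q.1, r) q.2 := by
      intro q
      by_cases h : q ∈ A
      · obtain ⟨hq, r, hr, hr2, hr3⟩ := Finset.mem_filter.1 h
        obtain ⟨hq, ho⟩ := Finset.mem_filter.1 hq
        obtain ⟨w, hw, hmin⟩ := Finset.exists_min_image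
          (P.filter fun r => On r q.2 ∧ q.1.1 < r.1) (fun r => r.1) ⟨r, by simp [hr, hr2, hr3]⟩
        rw [Finset.mem_filter] at hw
        exact ⟨w, fun _ => ⟨hw.1, hw.2.2, ho, hw.2.1, fun r h1 h2 h3 => hmin r (by
          rw [Finset.mem_filter]; exact ⟨h1, h2, h3⟩)⟩⟩
      · exact ⟨0, fun h' => absurd h' h⟩
    choose r hr using ex
    refine Finset.card_le_card_of_injOn (fun q => (q.1, r q)) ?_ ?_
    · intro q hq
      have h1 := (Finset.mem_filter.1 (Finset.mem_filter.1 hq).1).1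
      rw [Finset.mem_product] at h1
      obtain ⟨a, b, c⟩ := hr q hq
      exact Finset.mem_coe.2 (mem_edges.2 ⟨h1.1, a, b, q.2, h1.2, c⟩)
    · intro q hq q' hq' h
      simp only [Prod.mk.injEq] at h
      obtain ⟨a, b, c⟩ := hr q hq
      obtain ⟨a', b', c'⟩ := hr q' hq'
      rw [← h.1, ← h.2] at c'
      exact Prod.ext h.1 (line_unique b.ne c.1 c.2.1 c'.1 c'.2.1)
  omega

lemma edges_bound (P L : Finset Pt) :
    ((edges P L).card : ℝ) ≤ 6 * ((P.card : ℝ) ^ ((2 : ℝ) / 3) * (L.card : ℝ) ^ ((2 : ℝ) / 3))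
      + 6 * P.card := by
  set e : ℝ := ((edges P L).card : ℝ)
  set m : ℝ := (P.card : ℝ) with hmdef
  set n : ℝ := (L.card : ℝ)
  have hm : 0 ≤ m := Nat.cast_nonneg _
  have hn : 0 ≤ n := Nat.cast_nonneg _
  have he : 0 ≤ e := Nat.cast_nonneg _
  have hK : 0 ≤ m ^ ((2 : ℝ) / 3) * n ^ ((2 : ℝ) / 3) := by positivity
  by_cases hc : e ≤ 6 * m
  · linarith
  push Not at hc
  have hepos : 0 < e := by linarith
  have hX : ((XP (edges P L)).card : ℝ) ≤ n ^ 2 := by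
    have hX' := XP_card_le P L
    simp only [n]
    exact_mod_cast hX'
  have h := crossing_sampled (good_edges P L) (XP_distinct P L) (6 * m / e) (by positivity)
    ((div_le_one hepos).2 hc.le)
  change (6 * m / e) ^ 2 * e ≤ 3 * ((6 * m / e) * m) + _ at h
  have h2 : (6 * m / e) ^ 2 * e ≤ 3 * ((6 * m / e) * m) + (6 * m / e) ^ 4 * n ^ 2 :=
    h.trans (by gcongr)
  have h3 : e ^ 3 ≤ 72 * (m ^ 2 * n ^ 2) := by
    rcases hm.eq_or_lt with h0 | h0
    · exfalso
      have hP : P.card = 0 := by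
        have h0' : (P.card : ℝ) = 0 := h0.symm
        exact Nat.cast_eq_zero.1 h0'
      have : edges P L = ∅ := by
        rw [Finset.card_eq_zero] at hP
        simp [edges, hP]
      have he0 : e = 0 := by simp [e, this]
      linarith
    have e4 : (6 * m / e) ^ 2 * e * e ^ 4 = 36 * m ^ 2 * e ^ 3 := by field_simp; ring
    have e5 : (3 * ((6 * m / e) * m) + (6 * m / e) ^ 4 * n ^ 2) * e ^ 4 =
      18 * m ^ 2 * e ^ 3 + 1296 * m ^ 4 * n ^ 2 := by field_simp; ring
    have h4 := mul_le_mul_of_nonneg_right h2 (by positivity : 0 ≤ e ^ 4)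
    rw [e4, e5] at h4
    have h5 : 0 ≤ (18 * m ^ 2) * (72 * (m ^ 2 * n ^ 2) - e ^ 3) := by nlinarith
    have := nonneg_of_mul_nonneg_right h5 (by positivity)
    linarith
  have h6 : (m ^ ((2 : ℝ) / 3) * n ^ ((2 : ℝ) / 3)) ^ 3 = m ^ 2 * n ^ 2 := by
    rw [mul_pow, ← Real.rpow_natCast, ← Real.rpow_mul hm, ← Real.rpow_natCast (n ^ _),
      ← Real.rpow_mul hn]
    norm_num
  have h7 : e ^ 3 ≤ (6 * (m ^ ((2 : ℝ) / 3) * n ^ ((2 : ℝ) / 3))) ^ 3 := by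
    rw [mul_pow, h6]
    have : 0 ≤ m ^ 2 * n ^ 2 := by positivity
    linarith
  have := le_of_pow_le_pow_left₀ (by norm_num) (by positivity) h7
  linarith

end SzT

lemma SzT.line_cases {ℓ : Set (Fin 2 → ℝ)} (h : IsLine ℓ) :
    (∃ c : ℝ, ℓ = {x | x 0 = c}) ∨ ∃ l : SzT.Pt, ℓ = {x | SzT.On (x 0, x 1) l} := by
  obtain ⟨a, b, hb, rfl⟩ := h
  by_cases h0 : b 0 = 0
  · left
    have h1 : b 1 ≠ 0 := by
      intro h1; apply hb; ext i; fin_cases i <;> simp [h0, h1]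
    refine ⟨a 0, Set.ext fun x => ⟨?_, ?_⟩⟩
    · rintro ⟨t, rfl⟩; simp [h0]
    · intro hx
      refine ⟨(x 1 - a 1) / b 1, ?_⟩
      ext i; fin_cases i
      · simpa [h0] using hx
      · simp [h1]
  · right
    refine ⟨(b 1 / b 0, a 1 - b 1 / b 0 * a 0), Set.ext fun x => ⟨?_, ?_⟩⟩
    · rintro ⟨t, rfl⟩
      simp only [SzT.On, Set.mem_ofPred_eq, Pi.add_apply, Pi.smul_apply, smul_eq_mul]
      field_simp; ring
    · intro hx
      simp only [SzT.On, Set.mem_ofPred_eq] at hx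
      refine ⟨(x 0 - a 0) / b 0, ?_⟩
      ext i; fin_cases i
      · simp [h0]
      · simp [hx]; ring

/-- **Szemerédi–Trotter theorem.** There is an absolute constant `c` such that for
every set `P` of `m` distinct points and every set `L` of `n` distinct lines in the
plane, the number of incidences satisfies `I(P,L) ≤ c (m^{2/3} n^{2/3} + m + n)`. -/
theorem szemeredi_trotter :
    ∃ c : ℝ, 0 < c ∧
      ∀ (P : Finset (Fin 2 → ℝ)) (L : Finset (Set (Fin 2 → ℝ))),
        (∀ ℓ ∈ L, IsLine ℓ) →
        (Incidences P L : ℝ) ≤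
          c * ((P.card : ℝ) ^ ((2 : ℝ) / 3) * (L.card : ℝ) ^ ((2 : ℝ) / 3)
                + (P.card : ℝ) + (L.card : ℝ)) := by
  refine ⟨7, by norm_num, fun P L hL => ?_⟩
  set I := (P ×ˢ L).filter fun pc => pc.1 ∈ pc.2
  set Vt : Set (Fin 2 → ℝ) → Prop := fun ℓ => ∃ c : ℝ, ℓ = {x | x 0 = c}
  set A := I.filter fun q => Vt q.2
  set B := I.filter fun q => ¬ Vt q.2
  have hAB : A.card + B.card = I.card := Finset.card_filter_add_card_filter_not _
  have hA : A.card ≤ P.card := by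
    refine Finset.card_le_card_of_injOn (fun q => q.1) ?_ ?_
    · intro q hq
      exact (Finset.mem_product.1 (Finset.mem_filter.1 (Finset.mem_filter.1 hq).1).1).1
    · rintro ⟨p, l⟩ hq ⟨p', l'⟩ hq' h
      simp only at h
      subst h
      obtain ⟨hq, c, hc⟩ := Finset.mem_filter.1 hq
      obtain ⟨hq', c', hc'⟩ := Finset.mem_filter.1 hq'
      have h1 := (Finset.mem_filter.1 hq).2
      have h2 := (Finset.mem_filter.1 hq').2
      simp only at hc hc' h1 h2
      rw [hc] at h1
      rw [hc'] at h2
      simp only [Set.mem_ofPred_eq] at h1 h2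
      rw [hc, hc', ← h1, ← h2]
  have ex : ∀ ℓ : Set (Fin 2 → ℝ), ∃ l : SzT.Pt, ℓ ∈ L → ¬ Vt ℓ → ℓ = {x | SzT.On (x 0, x 1) l} := by
    intro ℓ
    by_cases h : ℓ ∈ L ∧ ¬ Vt ℓ
    · rcases SzT.line_cases (hL ℓ h.1) with h' | ⟨l, hl⟩
      · exact absurd h' h.2
      · exact ⟨l, fun _ _ => hl⟩
    · exact ⟨0, fun a b => absurd ⟨a, b⟩ h⟩
  choose lam hlam using ex
  set g : (Fin 2 → ℝ) → SzT.Pt := fun x => (x 0, x 1)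
  have hg : Function.Injective g := by
    intro x y h
    simp only [g, Prod.mk.injEq] at h
    ext i; fin_cases i
    exacts [h.1, h.2]
  set P' := P.image g
  set L' := L.image lam
  have hP' : P'.card ≤ P.card := Finset.card_image_le
  have hL' : L'.card ≤ L.card := Finset.card_image_le
  have hB : B.card ≤ (SzT.inc P' L').card := by
    refine Finset.card_le_card_of_injOn (fun q => (g q.1, lam q.2)) ?_ ?_
    · intro q hq
      obtain ⟨hq, hv⟩ := Finset.mem_filter.1 hq
      obtain ⟨hq, ho⟩ := Finset.mem_filter.1 hq
      rw [Finset.mem_product] at hq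
      rw [hlam _ hq.2 hv] at ho
      exact Finset.mem_coe.2 (Finset.mem_filter.2 ⟨Finset.mem_product.2
        ⟨Finset.mem_image_of_mem _ hq.1, Finset.mem_image_of_mem _ hq.2⟩, ho⟩)
    · intro q hq q' hq' h
      simp only [Prod.mk.injEq] at h
      obtain ⟨hq, hv⟩ := Finset.mem_filter.1 hq
      obtain ⟨hq', hv'⟩ := Finset.mem_filter.1 hq'
      have h1 := (Finset.mem_product.1 (Finset.mem_filter.1 hq).1).2
      have h2 := (Finset.mem_product.1 (Finset.mem_filter.1 hq').1).2
      refine Prod.ext (hg h.1) ?_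
      rw [hlam _ h1 hv, hlam _ h2 hv', h.2]
  have h1 := SzT.inc_le P' L'
  have h2 := SzT.edges_bound P' L'
  have h3 : (P'.card : ℝ) ^ ((2 : ℝ) / 3) * (L'.card : ℝ) ^ ((2 : ℝ) / 3) ≤
      (P.card : ℝ) ^ ((2 : ℝ) / 3) * (L.card : ℝ) ^ ((2 : ℝ) / 3) := by gcongr
  have h4 : (P'.card : ℝ) ≤ P.card := by exact_mod_cast hP'
  have h5 : (I.card : ℝ) ≤ P.card + L.card + (SzT.edges P' L').card := by
    exact_mod_cast (by omega : I.card ≤ P.card + L.card + (SzT.edges P' L').card)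
  have h6 : 0 ≤ (P.card : ℝ) ^ ((2 : ℝ) / 3) * (L.card : ℝ) ^ ((2 : ℝ) / 3) := by positivity
  have h7 : (0 : ℝ) ≤ L.card := Nat.cast_nonneg _
  change (I.card : ℝ) ≤ _
  linarith
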